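/- arXiv:2507.20544 — 2 statements merged into one kernel-verified Lean document; each statement's English description precedes it below -/
import Mathlib

section
/- For every integer m > 1, the sum over k from 1 to ⌊m/2⌋ of (log(2 sin(πk/m)))² is strictly greater than (π²/24)·m − 2.45 − (log m)². -/
open Real Finset

/-! The integral of `(log (2 sin θ))²` over `[0, π/2]` is at least `π³/24`, by Bessel's inequality
for the orthogonal family `cos (2nθ)`, `n ≥ 1`, against which `log (2 sin θ)` has coefficients
`-π/(4n)`. The sum is compared with this integral on the grid of mesh `h = π/x`, where `x = m`.
Since `log (2 sin θ)` is increasing, its square is the sum of an antitone and a monotone function,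
so the grid sum, which uses both endpoints, dominates the integral over `[h, ⌊x/2⌋h]`. The two
pieces left over cost at most `h (log² x + 1 + log² 2)` near `0`, where
`log (2 sin θ) ≥ 1 + log (θ/π)`, and `h log² 2` near `π/2`.
-/

section Bessel

open MeasureTheory

variable {α ι : Type*} [MeasurableSpace α] {μ : Measure α}

theorem inner_toLp_toLp_eq_integral_mul {f g : α → ℝ} (hf : MemLp f 2 μ) (hg : MemLp g 2 μ) :
    inner ℝ (hf.toLp f) (hg.toLp g) = ∫ a, f a * g a ∂μ := by
  rw [L2.inner_def]
  refine integral_congr_ae ?_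
  filter_upwards [hf.coeFn_toLp, hg.coeFn_toLp] with a hfa hga
  rw [hfa, hga, RCLike.inner_apply', conj_trivial]

theorem tsum_sq_integral_mul_le_mul_integral_sq [DecidableEq ι] {f : α → ℝ} {e : ι → α → ℝ} {c : ℝ}
    (hc : 0 < c) (hf : MemLp f 2 μ) (he : ∀ i, MemLp (e i) 2 μ)
    (horth : ∀ i j, ∫ a, e i a * e j a ∂μ = if i = j then c else 0) :
    ∑' i, (∫ a, e i a * f a ∂μ) ^ 2 ≤ c * ∫ a, f a ^ 2 ∂μ := by
  have hsqrt : (√c)⁻¹ ^ 2 = c⁻¹ := by rw [inv_pow, sq_sqrt hc.le]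
  have hv : Orthonormal ℝ fun i => (√c)⁻¹ • (he i).toLp (e i) := by
    refine orthonormal_iff_ite.mpr fun i j => ?_
    rw [real_inner_smul_left, real_inner_smul_right, ← mul_assoc, ← sq, hsqrt,
      inner_toLp_toLp_eq_integral_mul, horth]
    split_ifs <;> simp [hc.ne']
  have hbessel := hv.tsum_inner_products_le (hf.toLp f)
  simp only [real_inner_smul_left, inner_toLp_toLp_eq_integral_mul, norm_mul, mul_pow, norm_eq_abs,
    sq_abs, hsqrt, tsum_mul_left, ← real_inner_self_eq_norm_sq, ← sq] at hbessel
  rwa [inv_mul_le_iff₀ hc] at hbessel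

end Bessel

section RiemannSum

theorem integral_sq_le_sum_sq_of_monotoneOn {f : ℝ → ℝ} {a b : ℕ} (hab : a ≤ b)
    (hf : MonotoneOn f (Set.Icc (a : ℝ) b)) :
    ∫ x in (a : ℝ)..b, f x ^ 2 ≤ ∑ k ∈ Finset.Icc a b, f k ^ 2 := by
  have sq_eq (y : ℝ) : y ^ 2 = y⁻ ^ 2 + y⁺ ^ 2 := by
    rcases le_total y 0 with hy | hy <;> simp [hy]
  have hanti : AntitoneOn (fun x => (f x)⁻ ^ 2) (Set.Icc (a : ℝ) b) := fun x hx y hy hxy =>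
    pow_le_pow_left₀ (negPart_nonneg _) (negPart_anti (hf hx hy hxy)) 2
  have hmono : MonotoneOn (fun x => (f x)⁺ ^ 2) (Set.Icc (a : ℝ) b) := fun x hx y hy hxy =>
    pow_le_pow_left₀ (posPart_nonneg _) (posPart_mono (hf hx hy hxy)) 2
  have huIcc : Set.uIcc (a : ℝ) b = Set.Icc (a : ℝ) b := Set.uIcc_of_le (mod_cast hab)
  calc ∫ x in (a : ℝ)..b, f x ^ 2
      = (∫ x in (a : ℝ)..b, (f x)⁻ ^ 2) + ∫ x in (a : ℝ)..b, (f x)⁺ ^ 2 := by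
        simp_rw [sq_eq (f _)]
        exact intervalIntegral.integral_add (AntitoneOn.intervalIntegrable (huIcc ▸ hanti))
          (MonotoneOn.intervalIntegrable (huIcc ▸ hmono))
    _ ≤ ∑ k ∈ Ico a b, (f k)⁻ ^ 2 + ∑ k ∈ Ico a b, (f ↑(k + 1))⁺ ^ 2 :=
        add_le_add (hanti.integral_le_sum_Ico hab) (hmono.integral_le_sum_Ico hab)
    _ = ∑ k ∈ Ico a b, (f k)⁻ ^ 2 + ∑ k ∈ Ico (a + 1) (b + 1), (f k)⁺ ^ 2 := by
        rw [sum_Ico_add' (fun k : ℕ => (f k)⁺ ^ 2)]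
    _ ≤ ∑ k ∈ Finset.Icc a b, (f k)⁻ ^ 2 + ∑ k ∈ Finset.Icc a b, (f k)⁺ ^ 2 := by
        gcongr
        · exact Ico_subset_Icc_self
        · intro k hk
          simp only [Finset.mem_Ico, Finset.mem_Icc] at hk ⊢
          omega
    _ = ∑ k ∈ Finset.Icc a b, f k ^ 2 := by
        rw [← sum_add_distrib]
        simp_rw [← sq_eq]

theorem integral_sq_le_mul_sum_sq_of_monotoneOn {f : ℝ → ℝ} {a b : ℕ} {h : ℝ} (hh : 0 < h)
    (hab : a ≤ b) (hf : MonotoneOn f (Set.Icc (h * a) (h * b))) :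
    ∫ x in h * a..h * b, f x ^ 2 ≤ h * ∑ k ∈ Finset.Icc a b, f (h * k) ^ 2 := by
  have hscaled : MonotoneOn (fun t => f (h * t)) (Set.Icc (a : ℝ) b) := fun s hs t ht hst =>
    hf ⟨by gcongr; exact hs.1, by gcongr; exact hs.2⟩ ⟨by gcongr; exact ht.1, by gcongr; exact ht.2⟩
      (by gcongr)
  have hsum := integral_sq_le_sum_sq_of_monotoneOn hab hscaled
  rwa [intervalIntegral.integral_comp_mul_left (fun x => f x ^ 2) hh.ne', smul_eq_mul,
    inv_mul_le_iff₀ hh] at hsum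

end RiemannSum

section LogPrimitive

variable {a c x : ℝ}

theorem continuousOn_mul_sq_log_div (hc : 0 < c) :
    ContinuousOn (fun x => x * log (x / c) ^ 2) (Set.Ici 0) := by
  have hcont : Continuous fun x : ℝ => 4 * c * (√(x / c) * log √(x / c)) ^ 2 := by
    have := Continuous.mul_log (f := fun x : ℝ => √(x / c)) (by fun_prop)
    fun_prop
  refine hcont.continuousOn.congr fun x (hx : 0 ≤ x) => ?_
  have hxc : 0 ≤ x / c := by positivity
  simp only [log_sqrt hxc, mul_pow, sq_sqrt hxc]
  field_simp
  ring

theorem hasDerivAt_mul_sq_log_div_add_self (hc : c ≠ 0) (hx : x ≠ 0) :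
    HasDerivAt (fun x => x * log (x / c) ^ 2 + x) ((1 + log (x / c)) ^ 2) x := by
  have hlog : HasDerivAt (fun x => log (x / c)) (1 / c / (x / c)) x :=
    ((hasDerivAt_id x).div_const c).log (div_ne_zero hx hc)
  refine (((hasDerivAt_id x).mul (hlog.pow 2)).add (hasDerivAt_id x)).congr_deriv ?_
  simp only [id_eq, Pi.pow_apply]
  field_simp
  ring

theorem intervalIntegrable_sq_one_add_log_div (hc : 0 < c) (ha : 0 ≤ a) :
    IntervalIntegrable (fun x => (1 + log (x / c)) ^ 2) MeasureTheory.volume 0 a := by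
  refine intervalIntegral.intervalIntegrable_deriv_of_nonneg
    (g := fun x => x * log (x / c) ^ 2 + x) ?_ ?_ fun x _ => sq_nonneg _
  · rw [Set.uIcc_of_le ha]
    exact ((continuousOn_mul_sq_log_div hc).mono Set.Icc_subset_Ici_self).add continuousOn_id
  · rw [min_eq_left ha]
    exact fun x hx => hasDerivAt_mul_sq_log_div_add_self hc.ne' hx.1.ne'

theorem integral_sq_one_add_log_div (hc : 0 < c) (ha : 0 ≤ a) :
    ∫ x in 0..a, (1 + log (x / c)) ^ 2 = a * log (a / c) ^ 2 + a := by
  rw [intervalIntegral.integral_eq_sub_of_hasDerivAt_of_le ha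
    (((continuousOn_mul_sq_log_div hc).mono Set.Icc_subset_Ici_self).add continuousOn_id)
    (fun x hx => hasDerivAt_mul_sq_log_div_add_self hc.ne' hx.1.ne')
    (intervalIntegrable_sq_one_add_log_div hc ha)]
  simp

end LogPrimitive

section Cosine

theorem integral_cos_two_mul_nat_mul (n : ℕ) :
    ∫ θ in 0..π / 2, cos (2 * n * θ) = if n = 0 then π / 2 else 0 := by
  split_ifs with hn
  · simp [hn]
  · have hsin : sin (2 * n * (π / 2)) = 0 := by
      rw [show 2 * (n : ℝ) * (π / 2) = n * π by ring, sin_nat_mul_pi]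
    simp [hn, hsin]

theorem integral_cos_mul_cos_of_le {m n : ℕ} (hn : n ≠ 0) (hmn : m ≤ n) :
    ∫ θ in 0..π / 2, cos (2 * m * θ) * cos (2 * n * θ) = if m = n then π / 4 else 0 := by
  have hprod (θ : ℝ) : cos (2 * m * θ) * cos (2 * n * θ)
      = (cos (2 * (n - m : ℕ) * θ) + cos (2 * (n + m : ℕ) * θ)) / 2 := by
    push_cast [hmn]
    rw [mul_comm, show 2 * ((n : ℝ) - m) * θ = 2 * n * θ - 2 * m * θ by ring,
      show 2 * ((n : ℝ) + m) * θ = 2 * n * θ + 2 * m * θ by ring, ← two_mul_cos_mul_cos]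
    ring
  simp_rw [hprod]
  rw [intervalIntegral.integral_div, intervalIntegral.integral_add
    (Continuous.intervalIntegrable (by fun_prop) _ _)
    (Continuous.intervalIntegrable (by fun_prop) _ _),
    integral_cos_two_mul_nat_mul, integral_cos_two_mul_nat_mul, if_neg (by omega : n + m ≠ 0),
    add_zero]
  rcases hmn.eq_or_lt with rfl | hlt
  · simp only [Nat.sub_self, if_true]
    ring
  · rw [if_neg (by omega), if_neg hlt.ne, zero_div]

theorem integral_cos_mul_cos {m n : ℕ} (hn : n ≠ 0) :
    ∫ θ in 0..π / 2, cos (2 * m * θ) * cos (2 * n * θ) = if m = n then π / 4 else 0 := by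
  rcases le_total m n with hmn | hnm
  · exact integral_cos_mul_cos_of_le hn hmn
  · simp_rw [mul_comm (cos (2 * m * _)), eq_comm (a := m)]
    exact integral_cos_mul_cos_of_le (by omega) hnm

theorem sin_mul_sum_cos_add_cos (n : ℕ) (θ : ℝ) :
    sin θ * ∑ j ∈ range n, (cos (2 * j * θ) + cos (2 * (j + 1 : ℕ) * θ))
      = cos θ * sin (2 * n * θ) := by
  induction n with
  | zero => simp
  | succ n ih =>
    rw [sum_range_succ, mul_add, ih]
    push_cast
    rw [show 2 * ((n : ℝ) + 1) * θ = (2 * n + 1) * θ + θ by ring,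
      show 2 * (n : ℝ) * θ = (2 * n + 1) * θ - θ by ring,
      cos_add, cos_sub, sin_add, sin_sub]
    ring

theorem integral_sum_cos_add_cos {n : ℕ} (hn : n ≠ 0) :
    ∫ θ in 0..π / 2, ∑ j ∈ range n, (cos (2 * j * θ) + cos (2 * (j + 1 : ℕ) * θ)) = π / 2 := by
  rw [intervalIntegral.integral_finsetSum fun j _ =>
    Continuous.intervalIntegrable (by fun_prop) _ _]
  have hterm (j : ℕ) : ∫ θ in 0..π / 2, (cos (2 * j * θ) + cos (2 * (j + 1 : ℕ) * θ))
      = if j = 0 then π / 2 else 0 := by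
    rw [intervalIntegral.integral_add (Continuous.intervalIntegrable (by fun_prop) _ _)
      (Continuous.intervalIntegrable (by fun_prop) _ _), integral_cos_two_mul_nat_mul,
      integral_cos_two_mul_nat_mul, if_neg j.succ_ne_zero, add_zero]
  simp_rw [hterm]
  rw [sum_ite_eq' (range n) 0, if_pos (mem_range.mpr (Nat.pos_of_ne_zero hn))]

end Cosine

section LogTwoSin

open MeasureTheory

variable {a b θ : ℝ}

theorem measurable_log_two_mul_sin : Measurable fun θ => log (2 * sin θ) :=
  measurable_log.comp (by fun_prop)

theorem monotoneOn_log_two_mul_sin :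
    MonotoneOn (fun θ => log (2 * sin θ)) (Set.Ioc 0 (π / 2)) := by
  intro x hx y hy hxy
  have hpos : 0 < sin x := sin_pos_of_pos_of_lt_pi hx.1 (by linarith [hx.2, pi_pos])
  have hle : sin x ≤ sin y := sin_le_sin_of_le_of_le_pi_div_two (by linarith [hx.1, pi_pos])
    hy.2 hxy
  exact log_le_log (by positivity) (by gcongr)

theorem log_two_mul_sin_le_log_two (h0 : 0 < θ) (h1 : θ ≤ π / 2) : log (2 * sin θ) ≤ log 2 := by
  simpa using monotoneOn_log_two_mul_sin ⟨h0, h1⟩ (Set.right_mem_Ioc.mpr (by positivity)) h1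

theorem log_four_mul_div_pi_le_log_two_mul_sin (h0 : 0 < θ) (h1 : θ ≤ π / 2) :
    log (4 * (θ / π)) ≤ log (2 * sin θ) := by
  refine log_le_log (by positivity) ?_
  calc 4 * (θ / π) = 2 * (2 / π * θ) := by ring
    _ ≤ 2 * sin θ := by gcongr; exact mul_le_sin h0.le h1

theorem one_add_log_div_pi_le_log_two_mul_sin (h0 : 0 < θ) (h1 : θ ≤ π / 2) :
    1 + log (θ / π) ≤ log (2 * sin θ) := by
  refine le_trans ?_ (log_four_mul_div_pi_le_log_two_mul_sin h0 h1)
  have hexp : exp 1 ≤ 4 := by linarith [exp_one_lt_d9]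
  rw [log_mul four_ne_zero (by positivity)]
  gcongr
  exact (le_log_iff_exp_le four_pos).mpr hexp

theorem sq_log_two_mul_sin_le (h0 : 0 < θ) (h1 : θ ≤ π / 2) :
    log (2 * sin θ) ^ 2 ≤ (1 + log (θ / π)) ^ 2 + log 2 ^ 2 := by
  have hlower := one_add_log_div_pi_le_log_two_mul_sin h0 h1
  have hupper := log_two_mul_sin_le_log_two h0 h1
  rcases le_total (log (2 * sin θ)) 0 with hneg | hpos
  · nlinarith [sq_nonneg (log 2)]
  · nlinarith [sq_nonneg (1 + log (θ / π))]

theorem sq_log_two_mul_sin_le_sq_log_two (h0 : π / 4 ≤ θ) (h1 : θ ≤ π / 2) :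
    log (2 * sin θ) ^ 2 ≤ log 2 ^ 2 := by
  have hθ : 0 < θ := by linarith [pi_pos]
  have hnonneg : 0 ≤ log (2 * sin θ) := by
    refine (log_nonneg ?_).trans (log_four_mul_div_pi_le_log_two_mul_sin hθ h1)
    rw [← mul_div_assoc, le_div_iff₀ pi_pos]
    linarith
  exact pow_le_pow_left₀ hnonneg (log_two_mul_sin_le_log_two hθ h1) 2

theorem intervalIntegrable_sq_log_two_mul_sin (ha : 0 ≤ a) (hab : a ≤ b) (hb : b ≤ π / 2) :
    IntervalIntegrable (fun θ => log (2 * sin θ) ^ 2) volume a b := by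
  have hsub : Set.uIcc a b ⊆ Set.uIcc 0 b := by
    rw [Set.uIcc_of_le hab, Set.uIcc_of_le (ha.trans hab)]
    gcongr
  have hbound := ((intervalIntegrable_sq_one_add_log_div pi_pos (ha.trans hab)).mono_set hsub).add
    (intervalIntegrable_const (c := log 2 ^ 2))
  refine hbound.mono_fun' (measurable_log_two_mul_sin.pow_const 2).aestronglyMeasurable ?_
  rw [Set.uIoc_of_le hab]
  filter_upwards [ae_restrict_mem measurableSet_Ioc] with θ hθ
  rw [norm_of_nonneg (sq_nonneg _)]
  exact sq_log_two_mul_sin_le (ha.trans_lt hθ.1) (hθ.2.trans hb)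

theorem memLp_two_log_two_mul_sin :
    MemLp (fun θ => log (2 * sin θ)) 2 (volume.restrict (Set.Ioc 0 (π / 2))) :=
  (memLp_two_iff_integrable_sq measurable_log_two_mul_sin.aestronglyMeasurable).mpr
    (intervalIntegrable_sq_log_two_mul_sin le_rfl pi_div_two_pos.le le_rfl).1

theorem integral_sq_log_two_mul_sin_le (h0 : 0 ≤ a) (h1 : a ≤ π / 2) :
    ∫ θ in 0..a, log (2 * sin θ) ^ 2 ≤ a * (log (a / π) ^ 2 + 1 + log 2 ^ 2) := by
  have hprim := intervalIntegrable_sq_one_add_log_div pi_pos h0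
  calc ∫ θ in 0..a, log (2 * sin θ) ^ 2
      ≤ ∫ θ in 0..a, ((1 + log (θ / π)) ^ 2 + log 2 ^ 2) :=
        intervalIntegral.integral_mono_on_of_le_Ioo h0
          (intervalIntegrable_sq_log_two_mul_sin le_rfl h0 h1) (hprim.add intervalIntegrable_const)
          fun θ hθ => sq_log_two_mul_sin_le hθ.1 (hθ.2.le.trans h1)
    _ = a * (log (a / π) ^ 2 + 1 + log 2 ^ 2) := by
        rw [intervalIntegral.integral_add hprim intervalIntegrable_const,
          integral_sq_one_add_log_div pi_pos h0, intervalIntegral.integral_const, smul_eq_mul]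
        ring

theorem integral_sq_log_two_mul_sin_le_of_pi_div_four_le (h0 : π / 4 ≤ a) (h1 : a ≤ π / 2) :
    ∫ θ in a..π / 2, log (2 * sin θ) ^ 2 ≤ (π / 2 - a) * log 2 ^ 2 := by
  have ha : 0 ≤ a := by linarith [pi_pos]
  calc ∫ θ in a..π / 2, log (2 * sin θ) ^ 2 ≤ ∫ _ in a..π / 2, log 2 ^ 2 :=
        intervalIntegral.integral_mono_on h1
          (intervalIntegrable_sq_log_two_mul_sin ha h1 le_rfl) intervalIntegrable_const
          fun θ hθ => sq_log_two_mul_sin_le_sq_log_two (h0.trans hθ.1) hθ.2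
    _ = (π / 2 - a) * log 2 ^ 2 := by rw [intervalIntegral.integral_const, smul_eq_mul]

theorem continuous_log_two_mul_sin_mul_sin (n : ℕ) :
    Continuous fun θ => log (2 * sin θ) * sin (2 * n * θ) := by
  have hlog : Continuous fun θ => 2 * sin θ * log (2 * sin θ) :=
    Continuous.mul_log (by fun_prop)
  have hU : Continuous fun θ => (Polynomial.Chebyshev.U ℝ (2 * n - 1)).eval (cos θ) / 2 := by
    fun_prop
  refine (hlog.mul hU).congr fun θ => ?_
  have hsin := Polynomial.Chebyshev.U_real_cos θ (2 * n - 1)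
  push_cast [sub_add_cancel] at hsin
  simp only [Pi.mul_apply, ← hsin]
  ring

theorem hasDerivAt_log_two_mul_sin_mul_sin (n : ℕ) (hθ : sin θ ≠ 0) :
    HasDerivAt (fun θ => log (2 * sin θ) * sin (2 * n * θ))
      (∑ j ∈ range n, (cos (2 * j * θ) + cos (2 * (j + 1 : ℕ) * θ))
        + 2 * n * (cos (2 * n * θ) * log (2 * sin θ))) θ := by
  have hlog := ((hasDerivAt_sin θ).const_mul 2).log (mul_ne_zero two_ne_zero hθ)
  have hsin := ((hasDerivAt_id θ).const_mul (2 * n : ℝ)).sin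
  refine (hlog.mul hsin).congr_deriv ?_
  rw [eq_div_of_mul_eq hθ ((mul_comm _ _).trans (sin_mul_sum_cos_add_cos n θ))]
  simp only [id_eq]
  field_simp

theorem integral_cos_mul_log_two_mul_sin {n : ℕ} (hn : n ≠ 0) :
    ∫ θ in 0..π / 2, cos (2 * n * θ) * log (2 * sin θ) = -(π / (4 * n)) := by
  have hlog : IntervalIntegrable (fun θ => log (2 * sin θ)) volume 0 (π / 2) :=
    (intervalIntegrable_iff_integrableOn_Ioc_of_le pi_div_two_pos.le).mpr
      (memLp_two_log_two_mul_sin.integrable one_le_two)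
  have hcos : IntervalIntegrable (fun θ => 2 * n * (cos (2 * n * θ) * log (2 * sin θ)))
      volume 0 (π / 2) :=
    (hlog.continuousOn_mul (by fun_prop)).const_mul _
  have hsum : IntervalIntegrable
      (fun θ => ∑ j ∈ range n, (cos (2 * j * θ) + cos (2 * (j + 1 : ℕ) * θ)))
      volume 0 (π / 2) :=
    Continuous.intervalIntegrable (by fun_prop) _ _
  have hftc := intervalIntegral.integral_eq_sub_of_hasDerivAt_of_le pi_div_two_pos.le
    (continuous_log_two_mul_sin_mul_sin n).continuousOn
    (fun θ hθ => hasDerivAt_log_two_mul_sin_mul_sin n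
      (sin_pos_of_pos_of_lt_pi hθ.1 (by linarith [hθ.2, pi_pos])).ne')
    (hsum.add hcos)
  have hend : sin (2 * n * (π / 2)) = 0 := by
    rw [show 2 * (n : ℝ) * (π / 2) = n * π by ring, sin_nat_mul_pi]
  rw [intervalIntegral.integral_add hsum hcos, integral_sum_cos_add_cos hn,
    intervalIntegral.integral_const_mul, hend, mul_zero, mul_zero, sin_zero, mul_zero,
    sub_zero] at hftc
  field_simp
  linarith

theorem pi_pow_three_div_le_integral_sq_log_two_mul_sin :
    π ^ 3 / 24 ≤ ∫ θ in 0..π / 2, log (2 * sin θ) ^ 2 := by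
  have hle : 0 ≤ π / 2 := pi_div_two_pos.le
  have hcos (n : ℕ) : MemLp (fun θ => cos (2 * (n + 1 : ℕ) * θ)) 2
      (volume.restrict (Set.Ioc 0 (π / 2))) :=
    (memLp_two_iff_integrable_sq (by fun_prop)).mpr
      (Continuous.intervalIntegrable (by fun_prop) 0 (π / 2)).1
  have hbessel := tsum_sq_integral_mul_le_mul_integral_sq (by positivity : 0 < π / 4)
    memLp_two_log_two_mul_sin hcos fun m n => by
      rw [← intervalIntegral.integral_of_le hle,
        integral_cos_mul_cos n.succ_ne_zero]
      simp only [Nat.succ_eq_add_one, Nat.add_right_cancel_iff]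
  have hzeta : HasSum (fun n : ℕ => (π / (4 * (n + 1 : ℕ))) ^ 2) (π ^ 2 / 16 * (π ^ 2 / 6)) := by
    have hshift := (hasSum_nat_add_iff' 1).mpr hasSum_zeta_two
    rw [sum_range_one, Nat.cast_zero, zero_pow two_ne_zero, div_zero, sub_zero] at hshift
    refine (hshift.mul_left (π ^ 2 / 16)).congr_fun fun n => ?_
    field_simp
    norm_num
  simp_rw [← intervalIntegral.integral_of_le hle,
    integral_cos_mul_log_two_mul_sin (Nat.succ_ne_zero _), neg_sq] at hbessel
  rw [hzeta.tsum_eq] at hbessel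
  refine le_of_mul_le_mul_left ?_ (by positivity : 0 < π / 4)
  linarith

theorem pi_pow_three_div_le_mul_add_sum_sq_log_two_mul_sin {h : ℝ} {n : ℕ} (hh : 0 < h)
    (hn : 1 ≤ n) (hlower : π / 4 ≤ h * n) (hupper : h * n ≤ π / 2) :
    π ^ 3 / 24 ≤ h * (log (h / π) ^ 2 + 1 + log 2 ^ 2)
      + h * ∑ k ∈ Finset.Icc 1 n, log (2 * sin (h * k)) ^ 2 + (π / 2 - h * n) * log 2 ^ 2 := by
  have hle : h ≤ h * n := le_mul_of_one_le_right hh.le (mod_cast hn)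
  have hmiddle : ∫ θ in h..h * n, log (2 * sin θ) ^ 2
      ≤ h * ∑ k ∈ Finset.Icc 1 n, log (2 * sin (h * k)) ^ 2 := by
    have hmono : MonotoneOn (fun θ => log (2 * sin θ)) (Set.Icc (h * (1 : ℕ)) (h * n)) :=
      monotoneOn_log_two_mul_sin.mono fun θ hθ =>
        ⟨hh.trans_le (by simpa using hθ.1), hθ.2.trans hupper⟩
    simpa using integral_sq_le_mul_sum_sq_of_monotoneOn hh hn hmono
  calc π ^ 3 / 24 ≤ ∫ θ in 0..π / 2, log (2 * sin θ) ^ 2 :=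
        pi_pow_three_div_le_integral_sq_log_two_mul_sin
    _ = (∫ θ in 0..h, log (2 * sin θ) ^ 2) + (∫ θ in h..h * n, log (2 * sin θ) ^ 2)
          + ∫ θ in h * n..π / 2, log (2 * sin θ) ^ 2 := by
        rw [intervalIntegral.integral_add_adjacent_intervals
            (intervalIntegrable_sq_log_two_mul_sin le_rfl hh.le (hle.trans hupper))
            (intervalIntegrable_sq_log_two_mul_sin hh.le hle hupper),
          intervalIntegral.integral_add_adjacent_intervals
            (intervalIntegrable_sq_log_two_mul_sin le_rfl (hh.le.trans hle) hupper)
            (intervalIntegrable_sq_log_two_mul_sin (hh.le.trans hle) hupper le_rfl)]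
    _ ≤ _ := add_le_add (add_le_add (integral_sq_log_two_mul_sin_le hh.le (hle.trans hupper))
        hmiddle) (integral_sq_log_two_mul_sin_le_of_pi_div_four_le hlower hupper)

end LogTwoSin

theorem sum_log_sq_sin_lower_general (x : ℝ) (hx : 2 ≤ x) :
    π ^ 2 / 24 * x - 2 - log x ^ 2
      < ∑ k ∈ Finset.Icc 1 ⌊x / 2⌋₊, log (2 * sin (π * k / x)) ^ 2 := by
  have hx0 : 0 < x := by linarith
  have hn : 1 ≤ ⌊x / 2⌋₊ := Nat.le_floor (by push_cast; linarith)
  have hfloor_le : (⌊x / 2⌋₊ : ℝ) ≤ x / 2 := Nat.floor_le (by positivity)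
  have hlt_floor : x / 2 < ⌊x / 2⌋₊ + 1 := Nat.lt_floor_add_one _
  have hquarter : x / 4 ≤ ⌊x / 2⌋₊ := by
    linarith [Nat.one_le_cast (α := ℝ).mpr hn]
  have hbound := pi_pow_three_div_le_mul_add_sum_sq_log_two_mul_sin (h := π / x) (by positivity) hn
    (by rw [div_mul_eq_mul_div, le_div_iff₀ hx0]; nlinarith [pi_pos])
    (by rw [div_mul_eq_mul_div, div_le_iff₀ hx0]; nlinarith [pi_pos])
  have hlog : log (π / x / π) = -log x := by
    rw [div_right_comm, div_self pi_ne_zero, one_div, log_inv]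
  rw [hlog, neg_sq] at hbound
  simp_rw [mul_div_right_comm π]
  set S := ∑ k ∈ Finset.Icc 1 ⌊x / 2⌋₊, log (2 * sin (π / x * k)) ^ 2
  have hscaled : π ^ 2 / 24 * x
      ≤ (log x ^ 2 + 1 + log 2 ^ 2) + S + (x / 2 - ⌊x / 2⌋₊) * log 2 ^ 2 := by
    refine le_of_mul_le_mul_left ?_ (by positivity : 0 < π / x)
    calc π / x * (π ^ 2 / 24 * x) = π ^ 3 / 24 := by field_simp
      _ ≤ _ := hbound
      _ = _ := by field_simp
  have hlog_two : log 2 ^ 2 < 1 / 2 := by nlinarith [log_two_lt_d9, log_two_gt_d9]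
  have htop : (x / 2 - ⌊x / 2⌋₊) * log 2 ^ 2 ≤ log 2 ^ 2 :=
    mul_le_of_le_one_left (sq_nonneg _) (by linarith)
  linarith

theorem sum_log_sq_sin_lower (m : ℕ) (hm : 1 < m) :
    ∑ k ∈ Finset.Icc 1 (m / 2), (Real.log (2 * Real.sin (π * k / m)))^2
      > π^2 / 24 * m - 2.45 - (Real.log m)^2 := by
  have hgeneral := sum_log_sq_sin_lower_general m (mod_cast hm)
  rw [Nat.floor_div_ofNat, Nat.floor_natCast] at hgeneral
  linarith
end

section
/- As m → ∞, the sum over k from 1 to ⌊m/2⌋ of (log(2 sin(πk/m)))² is asymptotic to (π²/24)·m, i.e., the ratio of the sum to (π²/24)·m tends to 1. -/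
open Real Finset Filter

open InnerProductSpace Interval MeasureTheory Metric Set Topology

/-!
With `δ = π / m`, the sum is `1 / δ` times a right-endpoint Riemann sum of `log (2 * sin t) ^ 2` on
`[0, π / 2]`. The integrand is unbounded at `0`, but it is dominated by the antitone integrable
function `log (t / π) ^ 2`, so its Riemann sums still converge to the integral.

For the integral, `Re (log (1 - z) ^ 2)` is harmonic in the unit disc and vanishes at `0`, and at
`z = exp (i * θ)` it equals `log (2 * sin (θ / 2)) ^ 2 - ((θ - π) / 2) ^ 2`. The mean value property
reaches the unit circle by dominated convergence, since `‖1 - ζ‖ ≤ 2 * ‖1 - r * ζ‖` bounds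
`log ‖1 - r * ζ‖` uniformly in the radius `r`. So both squares have the same mean `π ^ 2 / 12`.
-/

lemma eqOn_comp_natCeil {α : Type*} (g : ℕ → α) (n : ℕ) :
    EqOn (fun x : ℝ => g ⌈x⌉₊) (fun _ => g (n + 1)) (Ι (n : ℝ) (n + 1 : ℕ)) := by
  intro x hx
  rw [uIoc_of_le (by simp)] at hx
  have hceil : ⌈x⌉₊ = n + 1 := (Nat.ceil_eq_iff n.succ_ne_zero).2 hx
  simp only [hceil]

section RiemannSum

variable {E : Type*} [NormedAddCommGroup E] [NormedSpace ℝ E] [CompleteSpace E]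

lemma integral_comp_natCeil (g : ℕ → E) (n : ℕ) :
    ∫ x in (0 : ℝ)..n, g ⌈x⌉₊ = ∑ k ∈ Finset.Icc 1 n, g k := by
  have hint (k : ℕ) : IntervalIntegrable (fun x : ℝ => g ⌈x⌉₊) volume k (k + 1 : ℕ) :=
    intervalIntegrable_const.congr (eqOn_comp_natCeil g k).symm
  induction n with
  | zero => simp
  | succ n ih =>
    have hint₀ : IntervalIntegrable (fun x : ℝ => g ⌈x⌉₊) volume 0 n := by
      simpa using IntervalIntegrable.trans_iterate (a := fun k : ℕ => (k : ℝ)) fun k _ => hint k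
    rw [← intervalIntegral.integral_add_adjacent_intervals hint₀ (hint n), ih,
      intervalIntegral.integral_congr_ae (.of_forall <| eqOn_comp_natCeil g n),
      intervalIntegral.integral_const, Finset.sum_Icc_succ_top (Nat.le_add_left 1 n)]
    simp

lemma smul_sum_eq_integral_natCeil (f : ℝ → E) {δ : ℝ} (hδ : δ ≠ 0) (n : ℕ) :
    δ • ∑ k ∈ Finset.Icc 1 n, f (k * δ) = ∫ x in (0 : ℝ)..n * δ, f (⌈x / δ⌉₊ * δ) := by
  rw [intervalIntegral.integral_comp_div (fun y => f (⌈y⌉₊ * δ)) hδ, zero_div,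
    mul_div_cancel_right₀ _ hδ, integral_comp_natCeil fun k => f (k * δ)]

lemma le_natCeil_div_mul {δ : ℝ} (hδ : 0 < δ) (x : ℝ) : x ≤ ⌈x / δ⌉₊ * δ :=
  (div_le_iff₀ hδ).1 (Nat.le_ceil _)

lemma tendsto_natCeil_div_mul {x : ℝ} (hx : 0 ≤ x) :
    Tendsto (fun δ : ℝ => ⌈x / δ⌉₊ * δ) (𝓝[>] 0) (𝓝 x) := by
  refine ((tendsto_nat_ceil_mul_div_atTop hx).comp tendsto_inv_nhdsGT_zero).congr fun δ => ?_
  simp [div_eq_mul_inv]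

lemma tendsto_natFloor_div_mul {x : ℝ} (hx : 0 ≤ x) :
    Tendsto (fun δ : ℝ => ⌊x / δ⌋₊ * δ) (𝓝[>] 0) (𝓝 x) := by
  refine ((tendsto_nat_floor_mul_div_atTop hx).comp tendsto_inv_nhdsGT_zero).congr fun δ => ?_
  simp [div_eq_mul_inv]

lemma natCeil_div_mul_le_natFloor_div_mul {b x δ : ℝ} (hδ : 0 < δ) (hx : x ≤ ⌊b / δ⌋₊ * δ) :
    ⌈x / δ⌉₊ * δ ≤ ⌊b / δ⌋₊ * δ := by
  gcongr
  exact Nat.ceil_le.2 ((div_le_iff₀ hδ).2 hx)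

/-- Antitonicity lets `g` dominate all the step functions at once, because right endpoints lie to
the right of the points they represent. -/
theorem tendsto_riemannSum_of_norm_le_antitoneOn {f : ℝ → E} {g : ℝ → ℝ} {b : ℝ} (hb : 0 ≤ b)
    (hf : ∀ᵐ x ∂volume.restrict (Ioo 0 b), ContinuousAt f x) (hfg : ∀ x ∈ Ioc 0 b, ‖f x‖ ≤ g x)
    (hg : AntitoneOn g (Ioc 0 b)) (hgi : IntervalIntegrable g volume 0 b) :
    Tendsto (fun δ : ℝ => δ • ∑ k ∈ Finset.Icc 1 ⌊b / δ⌋₊, f (k * δ)) (𝓝[>] 0)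
      (𝓝 (∫ x in (0 : ℝ)..b, f x)) := by
  have hfloor {δ : ℝ} (hδ : 0 < δ) : ⌊b / δ⌋₊ * δ ≤ b :=
    (le_div_iff₀ hδ).1 (Nat.floor_le (by positivity))
  let F (δ x : ℝ) : E := (Ioc 0 (⌊b / δ⌋₊ * δ)).indicator (fun x => f (⌈x / δ⌉₊ * δ)) x
  have hsum : ∀ᶠ δ : ℝ in 𝓝[>] 0,
      ∫ x in Ioc 0 b, F δ x = δ • ∑ k ∈ Finset.Icc 1 ⌊b / δ⌋₊, f (k * δ) := by
    filter_upwards [self_mem_nhdsWithin] with δ (hδ : 0 < δ)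
    rw [smul_sum_eq_integral_natCeil f hδ.ne', intervalIntegral.integral_of_le (by positivity),
      setIntegral_indicator measurableSet_Ioc,
      inter_eq_right.2 (Ioc_subset_Ioc_right (hfloor hδ))]
  rw [intervalIntegral.integral_of_le hb]
  refine Tendsto.congr' hsum (tendsto_integral_filter_of_dominated_convergence g ?_ ?_ hgi.1 ?_)
  · refine .of_forall fun δ =>
      (StronglyMeasurable.indicator ?_ measurableSet_Ioc).aestronglyMeasurable
    exact (StronglyMeasurable.of_discrete (f := fun n : ℕ => f (n * δ))).comp_measurable
      (by fun_prop : Measurable fun x : ℝ => ⌈x / δ⌉₊)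
  · filter_upwards [self_mem_nhdsWithin] with δ (hδ : 0 < δ)
    filter_upwards [ae_restrict_mem measurableSet_Ioc] with x hx
    by_cases hmem : x ∈ Ioc 0 (⌊b / δ⌋₊ * δ)
    · have hle := le_natCeil_div_mul hδ x
      have hnode : ⌈x / δ⌉₊ * δ ∈ Ioc 0 b := ⟨hx.1.trans_le hle,
        (natCeil_div_mul_le_natFloor_div_mul hδ hmem.2).trans (hfloor hδ)⟩
      calc ‖F δ x‖ = ‖f (⌈x / δ⌉₊ * δ)‖ := by rw [show F δ x = _ from indicator_of_mem hmem _]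
        _ ≤ g (⌈x / δ⌉₊ * δ) := hfg _ hnode
        _ ≤ g x := hg hx hnode hle
    · rw [show F δ x = 0 from indicator_of_notMem hmem _, norm_zero]
      exact (norm_nonneg _).trans (hfg x hx)
  · rw [← restrict_Ioo_eq_restrict_Ioc]
    filter_upwards [ae_restrict_mem measurableSet_Ioo, hf] with x hx hfx
    have hxb : ∀ᶠ δ : ℝ in 𝓝[>] 0, x ∈ Ioc 0 (⌊b / δ⌋₊ * δ) := by
      filter_upwards [(tendsto_natFloor_div_mul hb).eventually_const_lt hx.2] with δ hδ
      exact ⟨hx.1, hδ.le⟩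
    refine (hfx.tendsto.comp (tendsto_natCeil_div_mul hx.1.le)).congr' ?_
    filter_upwards [hxb] with δ hδ using (indicator_of_mem hδ fun y => f (⌈y / δ⌉₊ * δ)).symm

end RiemannSum

lemma intervalIntegrable_log_pow (n : ℕ) :
    IntervalIntegrable (fun x => log x ^ n) volume 0 1 := by
  have hdom : IntervalIntegrable (fun x : ℝ => ((n : ℝ) + 1) ^ n * x ^ (-(n / (n + 1)) : ℝ))
      volume 0 1 := by
    refine (intervalIntegral.intervalIntegrable_rpow' ?_).const_mul _
    rw [neg_lt_neg_iff, div_lt_one (by positivity)]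
    linarith
  refine hdom.mono_fun' (by fun_prop) ?_
  rw [uIoc_of_le zero_le_one]
  filter_upwards [ae_restrict_mem measurableSet_Ioc] with x hx
  have h := abs_log_mul_self_rpow_lt x (1 / (n + 1)) hx.1 hx.2 (by positivity)
  have hxp : 0 < x ^ (1 / (n + 1) : ℝ) := rpow_pos_of_pos hx.1 _
  rw [one_div_one_div, abs_mul, abs_of_pos hxp] at h
  rw [rpow_neg hx.1.le, ← div_eq_mul_inv, le_div_iff₀ (rpow_pos_of_pos hx.1 _)]
  calc ‖log x ^ n‖ * x ^ (n / (n + 1) : ℝ)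
      = (|log x| * x ^ (1 / (n + 1) : ℝ)) ^ n := by
        rw [norm_pow, norm_eq_abs, mul_pow, ← rpow_mul_natCast hx.1.le]
        ring_nf
    _ ≤ (n + 1) ^ n := by gcongr

lemma abs_log_two_mul_sin_le {t : ℝ} (ht : t ∈ Ioc 0 (π / 2)) :
    |log (2 * sin t)| ≤ -log (t / π) := by
  have ht0 : 0 < t := ht.1
  have hlower : t / π ≤ 2 * sin t := by
    have hjordan := mul_le_sin ht.1.le ht.2
    have hsin : 0 ≤ sin t := le_trans (by positivity) hjordan
    calc t / π ≤ 2 * (t / π) := by linarith [show 0 < t / π by positivity]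
      _ = 2 / π * t := by ring
      _ ≤ 2 * sin t := by linarith
  have hupper : 2 * sin t ≤ (t / π)⁻¹ := by
    have h2 : 2 ≤ (t / π)⁻¹ := by
      rw [inv_div, le_div_iff₀ ht0]
      linarith [ht.2]
    linarith [sin_le_one t]
  have hpos : 0 < t / π := by positivity
  refine abs_le'.2 ⟨?_, neg_le_neg (log_le_log hpos hlower)⟩
  rw [← log_inv]
  exact log_le_log (hpos.trans_le hlower) hupper

lemma log_two_mul_sin_sq_le {t : ℝ} (ht : t ∈ Ioc 0 (π / 2)) :
    log (2 * sin t) ^ 2 ≤ log (t / π) ^ 2 :=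
  sq_le_sq.2 ((abs_log_two_mul_sin_le ht).trans (neg_le_abs _))

lemma antitoneOn_log_div_pi_sq : AntitoneOn (fun t => log (t / π) ^ 2) (Ioc 0 π) := by
  intro s hs t ht hst
  have ht1 : log (t / π) ≤ 0 :=
    log_nonpos (div_nonneg ht.1.le pi_pos.le) ((div_le_one pi_pos).2 ht.2)
  have hle : log (s / π) ≤ log (t / π) :=
    log_le_log (div_pos hs.1 pi_pos) (by gcongr)
  exact sq_le_sq.2 (abs_le_abs_of_nonpos ht1 hle)

lemma pi_div_two_mem_uIcc : π / 2 ∈ [[0, π]] := by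
  rw [uIcc_of_le pi_pos.le]
  constructor <;> linarith [pi_pos]

lemma intervalIntegrable_log_div_pi_sq :
    IntervalIntegrable (fun t => log (t / π) ^ 2) volume 0 (π / 2) := by
  have h : IntervalIntegrable (fun t => log (t / π) ^ 2) volume 0 π := by
    simpa [div_eq_mul_inv] using (intervalIntegrable_log_pow 2).comp_mul_right (c := π⁻¹)
  exact h.mono_set (uIcc_subset_uIcc_left pi_div_two_mem_uIcc)

lemma intervalIntegrable_log_two_mul_sin_sq :
    IntervalIntegrable (fun t => log (2 * sin t) ^ 2) volume 0 π := by
  have hleft : IntervalIntegrable (fun t => log (2 * sin t) ^ 2) volume 0 (π / 2) := by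
    refine intervalIntegrable_log_div_pi_sq.mono_fun'
      (Measurable.aestronglyMeasurable (by fun_prop)) ?_
    rw [uIoc_of_le (by positivity)]
    filter_upwards [ae_restrict_mem measurableSet_Ioc] with t ht
    rw [norm_of_nonneg (sq_nonneg _)]
    exact log_two_mul_sin_sq_le ht
  have hright : IntervalIntegrable (fun t => log (2 * sin t) ^ 2) volume (π / 2) π := by
    have h := (hleft.comp_sub_left π).symm
    simp only [sin_pi_sub, sub_zero, sub_half] at h
    exact h
  exact hleft.trans hright

lemma integral_log_two_mul_sin_sq_zero_pi_eq_two_mul :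
    ∫ t in (0 : ℝ)..π, log (2 * sin t) ^ 2 = 2 * ∫ t in (0 : ℝ)..(π / 2), log (2 * sin t) ^ 2 := by
  have hreflect : ∫ t in (π / 2)..π, log (2 * sin t) ^ 2 =
      ∫ t in (0 : ℝ)..(π / 2), log (2 * sin t) ^ 2 := by
    simpa [sub_half] using
      (intervalIntegral.integral_comp_sub_left (a := 0) (b := π / 2)
        (fun t => log (2 * sin t) ^ 2) π).symm
  rw [← intervalIntegral.integral_add_adjacent_intervals (b := π / 2), hreflect, two_mul]
  · exact intervalIntegrable_log_two_mul_sin_sq.mono_set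
      (uIcc_subset_uIcc_left pi_div_two_mem_uIcc)
  · exact intervalIntegrable_log_two_mul_sin_sq.mono_set
      (uIcc_subset_uIcc_right pi_div_two_mem_uIcc)

lemma norm_sub_le_two_mul_norm_sub_smul {E : Type*} [SeminormedAddCommGroup E] [NormedSpace ℝ E]
    {x y : E} (hxy : ‖x‖ = ‖y‖) {r : ℝ} (hr : 0 ≤ r) : ‖x - y‖ ≤ 2 * ‖x - r • y‖ := by
  have hry : ‖r • y - y‖ ≤ ‖x - r • y‖ := by
    calc ‖r • y - y‖ = |r - 1| * ‖y‖ := by rw [← norm_eq_abs, ← norm_smul, sub_smul, one_smul]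
      _ = |‖x‖ - ‖r • y‖| := by
        rw [norm_smul, norm_of_nonneg hr, hxy, abs_sub_comm, ← abs_of_nonneg (norm_nonneg y),
          ← abs_mul, abs_of_nonneg (norm_nonneg y), sub_mul, one_mul]
      _ ≤ ‖x - r • y‖ := abs_norm_sub_norm_le _ _
  calc ‖x - y‖ ≤ ‖x - r • y‖ + ‖r • y - y‖ := norm_sub_le_norm_sub_add_norm_sub _ _ _
    _ ≤ 2 * ‖x - r • y‖ := by linarith

section MeanValue

variable {F : Type*} [NormedAddCommGroup F] [NormedSpace ℝ F] [CompleteSpace F]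

theorem circleAverage_eq_of_harmonicOnNhd_ball_of_norm_le {f : ℂ → F} {c : ℂ} {R : ℝ} (hR : 0 < R)
    (hf : HarmonicOnNhd f (ball c R))
    (hcont : ∀ᵐ θ ∂volume.restrict (Ioo 0 (2 * π)), ContinuousAt f (circleMap c R θ))
    {g : ℝ → ℝ} (hg : IntervalIntegrable g volume 0 (2 * π))
    (hfg : ∀ᶠ r in 𝓝[<] R, ∀ᵐ θ ∂volume.restrict (Ioo 0 (2 * π)), ‖f (circleMap c r θ)‖ ≤ g θ) :
    circleAverage f c R = f c := by
  have hinside : ∀ᶠ r in 𝓝[<] R, closedBall c |r| ⊆ ball c R := by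
    filter_upwards [Ioo_mem_nhdsLT hR] with r hr
    exact closedBall_subset_ball (by rw [abs_of_pos hr.1]; exact hr.2)
  have hconst : ∀ᶠ r in 𝓝[<] R, circleAverage f c r = f c := by
    filter_upwards [hinside] with r hr using (hf.mono hr).circleAverage_eq
  refine tendsto_nhds_unique (f := fun r => circleAverage f c r) (l := 𝓝[<] R) ?_
    (tendsto_const_nhds.congr' <| hconst.mono fun _ => Eq.symm)
  simp only [circleAverage_def, intervalIntegral.integral_of_le two_pi_pos.le,
    integral_Ioc_eq_integral_Ioo]
  refine (tendsto_integral_filter_of_dominated_convergence g ?_ hfg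
    (hg.1.mono_set Ioo_subset_Ioc_self) ?_).const_smul _
  · filter_upwards [hinside] with r hr
    have hcr : Continuous fun θ => f (circleMap c r θ) :=
      hf.continuousOn.comp_continuous (continuous_circleMap c r)
        fun θ => hr (sphere_subset_closedBall (circleMap_mem_sphere' c r θ))
    exact hcr.aestronglyMeasurable
  · filter_upwards [hcont] with θ hθ
    have hradius : Tendsto (fun r => circleMap c r θ) (𝓝[<] R) (𝓝 (circleMap c R θ)) := by
      unfold circleMap
      exact (Continuous.tendsto (by fun_prop) R).mono_left nhdsWithin_le_nhds
    exact hθ.tendsto.comp hradius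

end MeanValue

lemma one_sub_circleMap_zero_one (θ : ℝ) :
    1 - circleMap 0 1 θ = ((2 * sin (θ / 2) : ℝ) : ℂ) *
      (Complex.cos ((θ - π) / 2 : ℝ) + Complex.sin ((θ - π) / 2 : ℝ) * Complex.I) := by
  have hphase : (((θ - π) / 2 : ℝ) : ℂ) = θ / 2 - π / 2 := by push_cast; ring
  have hcircle : circleMap 0 1 θ =
      Complex.cos (2 * (θ / 2 : ℂ)) + Complex.sin (2 * (θ / 2 : ℂ)) * Complex.I := by
    rw [circleMap_zero, Complex.ofReal_one, one_mul, Complex.exp_mul_I,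
      mul_div_cancel₀ _ two_ne_zero]
  rw [hcircle, hphase, Complex.cos_sub_pi_div_two, Complex.sin_sub_pi_div_two,
    Complex.cos_two_mul, Complex.sin_two_mul]
  push_cast
  linear_combination -2 * Complex.sin_sq_add_cos_sq (θ / 2 : ℂ)

lemma norm_one_sub_circleMap_zero_one (θ : ℝ) :
    ‖1 - circleMap 0 1 θ‖ = |2 * sin (θ / 2)| := by
  rw [one_sub_circleMap_zero_one, norm_mul, Complex.norm_cos_add_sin_mul_I, mul_one,
    Complex.norm_real, norm_eq_abs]

lemma sin_half_pos {θ : ℝ} (hθ : θ ∈ Ioo 0 (2 * π)) : 0 < sin (θ / 2) :=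
  sin_pos_of_pos_of_lt_pi (by linarith [hθ.1]) (by linarith [hθ.2])

lemma arg_one_sub_circleMap_zero_one {θ : ℝ} (hθ : θ ∈ Ioo 0 (2 * π)) :
    Complex.arg (1 - circleMap 0 1 θ) = (θ - π) / 2 := by
  rw [one_sub_circleMap_zero_one]
  exact Complex.arg_mul_cos_add_sin_mul_I (mul_pos two_pos (sin_half_pos hθ))
    ⟨by linarith [hθ.1, pi_pos], by linarith [hθ.2, pi_pos]⟩

lemma re_log_sq (z : ℂ) : (Complex.log z ^ 2).re = log ‖z‖ ^ 2 - z.arg ^ 2 := by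
  rw [sq, Complex.mul_re, Complex.log_re, Complex.log_im]
  ring

lemma abs_log_norm_sub_smul_le {E : Type*} [NormedAddCommGroup E] [NormedSpace ℝ E]
    {x y : E} (hx : ‖x‖ = 1) (hy : ‖y‖ = 1) (hxy : x ≠ y) {r : ℝ} (hr0 : 0 ≤ r) (hr1 : r ≤ 1) :
    |log ‖x - r • y‖| ≤ |log ‖x - y‖| + log 2 := by
  have hpos : 0 < ‖x - y‖ := norm_sub_pos_iff.2 hxy
  have hlower : ‖x - y‖ ≤ 2 * ‖x - r • y‖ :=
    norm_sub_le_two_mul_norm_sub_smul (hx.trans hy.symm) hr0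
  have hpos' : 0 < ‖x - r • y‖ := by linarith
  have hupper : ‖x - r • y‖ ≤ 2 := by
    calc ‖x - r • y‖ ≤ ‖x‖ + ‖r • y‖ := norm_sub_le _ _
      _ ≤ 2 := by rw [norm_smul, hx, hy, norm_of_nonneg hr0]; linarith
  have hlog_lower : log ‖x - y‖ ≤ log 2 + log ‖x - r • y‖ := by
    rw [← log_mul two_ne_zero hpos'.ne']
    exact log_le_log hpos hlower
  rw [abs_le]
  constructor
  · linarith [neg_abs_le (log ‖x - y‖)]
  · linarith [abs_nonneg (log ‖x - y‖), log_le_log hpos' hupper]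

lemma abs_log_norm_one_sub_circleMap_le {r θ : ℝ} (hr : r ∈ Set.Icc 0 1) (hθ : θ ∈ Ioo 0 (2 * π)) :
    |log ‖1 - circleMap 0 r θ‖| ≤ |log (2 * sin (θ / 2))| + log 2 := by
  have hsin := sin_half_pos hθ
  have hnorm : ‖1 - circleMap 0 1 θ‖ = 2 * sin (θ / 2) := by
    rw [norm_one_sub_circleMap_zero_one, abs_of_pos (by positivity)]
  have hne : 1 ≠ circleMap 0 1 θ :=
    norm_sub_pos_iff.1 (by rw [hnorm]; positivity)
  have hscale : circleMap 0 r θ = r • circleMap 0 1 θ := by simp [circleMap_zero]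
  rw [← hnorm, hscale]
  exact abs_log_norm_sub_smul_le norm_one (by simp) hne hr.1 hr.2

lemma one_sub_circleMap_mem_slitPlane {θ : ℝ} (hθ : θ ∈ Ioo 0 (2 * π)) :
    1 - circleMap 0 1 θ ∈ Complex.slitPlane := by
  refine Complex.mem_slitPlane_iff_arg.2 ⟨?_, ?_⟩
  · rw [arg_one_sub_circleMap_zero_one hθ]
    linarith [hθ.2, pi_pos]
  · rw [← norm_pos_iff, norm_one_sub_circleMap_zero_one]
    exact abs_pos.2 (mul_pos two_pos (sin_half_pos hθ)).ne'

lemma analyticAt_log_one_sub_sq {z : ℂ} (hz : 1 - z ∈ Complex.slitPlane) :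
    AnalyticAt ℂ (fun w => Complex.log (1 - w) ^ 2) z :=
  ((analyticAt_const.sub analyticAt_id).clog hz).pow 2

lemma abs_re_log_one_sub_circleMap_sq_le {r θ : ℝ} (hr : r ∈ Set.Icc 0 1) (hθ : θ ∈ Ioo 0 (2 * π)) :
    |(Complex.log (1 - circleMap 0 r θ) ^ 2).re| ≤
      2 * log (2 * sin (θ / 2)) ^ 2 + (2 * log 2 ^ 2 + π ^ 2) := by
  have hlog : log ‖1 - circleMap 0 r θ‖ ^ 2 ≤ 2 * log (2 * sin (θ / 2)) ^ 2 + 2 * log 2 ^ 2 := by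
    calc log ‖1 - circleMap 0 r θ‖ ^ 2 ≤ (|log (2 * sin (θ / 2))| + log 2) ^ 2 :=
          sq_le_sq' (abs_le.1 (abs_log_norm_one_sub_circleMap_le hr hθ)).1
            (abs_le.1 (abs_log_norm_one_sub_circleMap_le hr hθ)).2
      _ ≤ 2 * (|log (2 * sin (θ / 2))| ^ 2 + log 2 ^ 2) := add_sq_le
      _ = 2 * log (2 * sin (θ / 2)) ^ 2 + 2 * log 2 ^ 2 := by rw [sq_abs, mul_add]
  have harg : (1 - circleMap 0 r θ).arg ^ 2 ≤ π ^ 2 :=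
    sq_le_sq' (Complex.neg_pi_lt_arg _).le (Complex.arg_le_pi _)
  rw [re_log_sq]
  calc |log ‖1 - circleMap 0 r θ‖ ^ 2 - (1 - circleMap 0 r θ).arg ^ 2|
      ≤ log ‖1 - circleMap 0 r θ‖ ^ 2 + (1 - circleMap 0 r θ).arg ^ 2 :=
        abs_le.2 ⟨by linarith [sq_nonneg (log ‖1 - circleMap 0 r θ‖)],
          by linarith [sq_nonneg (1 - circleMap 0 r θ).arg]⟩
    _ ≤ 2 * log (2 * sin (θ / 2)) ^ 2 + (2 * log 2 ^ 2 + π ^ 2) := by linarith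

lemma intervalIntegrable_log_two_mul_sin_half_sq :
    IntervalIntegrable (fun θ => log (2 * sin (θ / 2)) ^ 2) volume 0 (2 * π) := by
  simpa [div_eq_mul_inv, mul_comm π] using
    intervalIntegrable_log_two_mul_sin_sq.comp_mul_right (c := 2⁻¹)

theorem circleAverage_re_log_one_sub_sq :
    circleAverage (fun z => (Complex.log (1 - z) ^ 2).re) 0 1 = 0 := by
  have hharmonic : HarmonicOnNhd (fun z => (Complex.log (1 - z) ^ 2).re) (ball 0 1) := by
    intro z hz
    refine (analyticAt_log_one_sub_sq ?_).harmonicAt_re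
    simpa [sub_eq_add_neg] using Complex.mem_slitPlane_of_norm_lt_one (z := -z) (by simpa using hz)
  refine (circleAverage_eq_of_harmonicOnNhd_ball_of_norm_le one_pos hharmonic ?_
    ((intervalIntegrable_log_two_mul_sin_half_sq.const_mul 2).add
      (intervalIntegrable_const (c := 2 * log 2 ^ 2 + π ^ 2))) ?_).trans (by simp)
  · refine ae_restrict_of_forall_mem measurableSet_Ioo fun θ hθ => ?_
    exact Complex.continuous_re.continuousAt.comp
      (analyticAt_log_one_sub_sq (one_sub_circleMap_mem_slitPlane hθ)).continuousAt
  · filter_upwards [Ioo_mem_nhdsLT zero_lt_one] with r hr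
    exact ae_restrict_of_forall_mem measurableSet_Ioo fun θ hθ =>
      abs_re_log_one_sub_circleMap_sq_le (Ioo_subset_Icc_self hr) hθ

lemma re_log_one_sub_circleMap_sq {θ : ℝ} (hθ : θ ∈ Ioo 0 (2 * π)) :
    (Complex.log (1 - circleMap 0 1 θ) ^ 2).re =
      log (2 * sin (θ / 2)) ^ 2 - ((θ - π) / 2) ^ 2 := by
  rw [re_log_sq, norm_one_sub_circleMap_zero_one, log_abs, arg_one_sub_circleMap_zero_one hθ]

lemma integral_sub_pi_div_two_sq :
    ∫ θ in (0 : ℝ)..(2 * π), ((θ - π) / 2) ^ 2 = π ^ 3 / 6 := by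
  simp only [div_pow]
  rw [intervalIntegral.integral_div, intervalIntegral.integral_comp_sub_right (fun θ => θ ^ 2),
    integral_pow]
  ring

lemma integral_log_two_mul_sin_half_sq :
    ∫ θ in (0 : ℝ)..(2 * π), log (2 * sin (θ / 2)) ^ 2 = π ^ 3 / 6 := by
  have hmean : ∫ θ in (0 : ℝ)..(2 * π), (Complex.log (1 - circleMap 0 1 θ) ^ 2).re = 0 := by
    simpa [circleAverage_def, pi_ne_zero] using circleAverage_re_log_one_sub_sq
  have hcongr : ∫ θ in (0 : ℝ)..(2 * π), (Complex.log (1 - circleMap 0 1 θ) ^ 2).re =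
      ∫ θ in (0 : ℝ)..(2 * π), (log (2 * sin (θ / 2)) ^ 2 - ((θ - π) / 2) ^ 2) := by
    simp only [intervalIntegral.integral_of_le two_pi_pos.le, integral_Ioc_eq_integral_Ioo]
    exact setIntegral_congr_fun measurableSet_Ioo fun θ hθ => re_log_one_sub_circleMap_sq hθ
  rw [hcongr, intervalIntegral.integral_sub intervalIntegrable_log_two_mul_sin_half_sq
    (Continuous.intervalIntegrable (by fun_prop) _ _), integral_sub_pi_div_two_sq] at hmean
  exact sub_eq_zero.1 hmean

theorem integral_log_two_mul_sin_sq_zero_pi :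
    ∫ t in (0 : ℝ)..π, log (2 * sin t) ^ 2 = π ^ 3 / 12 := by
  have hscale := intervalIntegral.integral_comp_div (a := 0) (b := 2 * π)
    (fun t => log (2 * sin t) ^ 2) two_ne_zero
  rw [integral_log_two_mul_sin_half_sq, zero_div, mul_div_cancel_left₀ _ two_ne_zero,
    smul_eq_mul] at hscale
  linarith

theorem integral_log_two_mul_sin_sq_zero_pi_div_two :
    ∫ t in (0 : ℝ)..(π / 2), log (2 * sin t) ^ 2 = π ^ 3 / 24 := by
  have h := integral_log_two_mul_sin_sq_zero_pi_eq_two_mul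
  rw [integral_log_two_mul_sin_sq_zero_pi] at h
  linarith

theorem tendsto_riemannSum_log_two_mul_sin_sq :
    Tendsto (fun δ : ℝ => δ • ∑ k ∈ Finset.Icc 1 ⌊π / 2 / δ⌋₊, log (2 * sin (k * δ)) ^ 2) (𝓝[>] 0)
      (𝓝 (π ^ 3 / 24)) := by
  rw [← integral_log_two_mul_sin_sq_zero_pi_div_two]
  refine tendsto_riemannSum_of_norm_le_antitoneOn (f := fun t => log (2 * sin t) ^ 2)
    pi_div_two_pos.le ?_ ?_
    (antitoneOn_log_div_pi_sq.mono (Ioc_subset_Ioc_right (half_le_self pi_pos.le)))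
    intervalIntegrable_log_div_pi_sq
  · refine ae_restrict_of_forall_mem measurableSet_Ioo fun t ht => ?_
    have hsin : 0 < sin t := sin_pos_of_pos_of_lt_pi ht.1 (by linarith [ht.2, pi_pos])
    exact (ContinuousAt.log (by fun_prop) (by positivity)).pow 2
  · intro t ht
    rw [norm_of_nonneg (sq_nonneg _)]
    exact log_two_mul_sin_sq_le ht

lemma tendsto_div_natCast_nhdsGT_zero {a : ℝ} (ha : 0 < a) :
    Tendsto (fun m : ℕ => a / m) atTop (𝓝[>] 0) := by
  refine tendsto_nhdsWithin_iff.2 ⟨tendsto_const_div_atTop_nhds_zero_nat a, ?_⟩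
  filter_upwards [eventually_gt_atTop 0] with m hm
  exact div_pos ha (Nat.cast_pos.2 hm)

theorem sum_log_sq_sin_asymptotic :
    Tendsto (fun m : ℕ =>
        (∑ k ∈ Finset.Icc 1 (m / 2), (Real.log (2 * Real.sin (π * k / m)))^2)
          / (π^2 / 24 * m)) atTop (nhds 1) := by
  have hratio := (tendsto_riemannSum_log_two_mul_sin_sq.comp
    (tendsto_div_natCast_nhdsGT_zero pi_pos)).div_const (π ^ 3 / 24)
  rw [div_self (by positivity)] at hratio
  refine hratio.congr fun m => ?_
  have hfloor : ⌊π / 2 / (π / m)⌋₊ = m / 2 := by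
    rw [div_div_div_cancel_left' _ _ pi_ne_zero]
    exact Nat.floor_div_eq_div m 2
  have hnode (k : ℕ) : k * (π / m) = π * k / m := by ring
  simp only [Function.comp_apply, smul_eq_mul, hfloor, hnode]
  field_simp
end
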